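/- Let n ∈ ℕ and b, c : Fin n → Fin 4, and suppose there exists a coordinate i with b i ≠ 0 and c i = 0. Then Σ_{a ◁ b} (−1)^{w(a)} · ⟨a,c⟩ = 0, where the sum ranges over all a : Fin n → Fin 4 with a ◁ b and ⟨a,c⟩ ∈ {0,1} ⊆ ℝ is the symplectic indicator. -/

import Mathlib

/-!
Fix a coordinate `i` with `b i ≠ 0` and `c i = 0`. Toggling the `i`-th factor of `a` between
`0` and `b i` is a fixed-point-free involution of `{a | a ◁ b}`. It changes the weight by exactly
one (`pauliWt_update`), hence flips the sign, and since `c` is the identity at `i` it does not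
change the symplectic indicator (`sympInd_update`). The terms of the sum therefore cancel in pairs.
-/

/-- The Pauli weight: the number of non-identity tensor factors. -/
def pauliWt {n : ℕ} (a : Fin n → Fin 4) : ℕ :=
  (Finset.univ.filter (fun i => a i ≠ 0)).card

/-- `b` is majorized by `a` (`b ◁ a`): on the support of `b`, `a` agrees with `b`. -/
def pauliMaj {n : ℕ} (b a : Fin n → Fin 4) : Prop :=
  ∀ i, b i ≠ 0 → a i = b i

instance {n : ℕ} (b a : Fin n → Fin 4) : Decidable (pauliMaj b a) :=
  inferInstanceAs (Decidable (∀ i, b i ≠ 0 → a i = b i))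

/-- Two single-qubit Pauli labels anticommute iff both are non-identity and distinct. -/
def pauliAnti (p q : Fin 4) : Prop := p ≠ 0 ∧ q ≠ 0 ∧ p ≠ q

instance (p q : Fin 4) : Decidable (pauliAnti p q) :=
  inferInstanceAs (Decidable (p ≠ 0 ∧ q ≠ 0 ∧ p ≠ q))

/-- The number of coordinates at which two Pauli strings anticommute. -/
def pauliN {n : ℕ} (a b : Fin n → Fin 4) : ℕ :=
  (Finset.univ.filter (fun i => pauliAnti (a i) (b i))).card

/-- The symplectic indicator `⟨a,b⟩ ∈ {0,1} ⊆ ℝ`: the parity of `pauliN a b`. -/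
def sympInd {n : ℕ} (a b : Fin n → Fin 4) : ℝ := ((pauliN a b % 2 : ℕ) : ℝ)

theorem pauliWt_update {n : ℕ} (a : Fin n → Fin 4) (i : Fin n) (p : Fin 4)
    (ha : a i = 0) (hp : p ≠ 0) : pauliWt (Function.update a i p) = pauliWt a + 1 := by
  unfold pauliWt
  rw [← Finset.card_insert_of_notMem (a := i) (by simp [ha])]
  congr 1
  ext j
  by_cases hj : j = i
  · subst hj; simp [hp]
  · simp [hj]

theorem sympInd_update {n : ℕ} (a c : Fin n → Fin 4) (i : Fin n) (p : Fin 4)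
    (hc : c i = 0) : sympInd (Function.update a i p) c = sympInd a c := by
  have hN : pauliN (Function.update a i p) c = pauliN a c := by
    unfold pauliN
    congr 1
    ext j
    simp only [Finset.mem_filter, Finset.mem_univ, true_and]
    by_cases hj : j = i
    · subst hj; simp [pauliAnti, hc]
    · simp [hj]
  rw [sympInd, sympInd, hN]

/-- If `b` has a non-identity coordinate where `c` is the identity, then
`Σ_{a ◁ b} (−1)^{w(a)} ⟨a,c⟩ = 0`. -/
theorem moebius_coefficient_cancellation (n : ℕ) (b c : Fin n → Fin 4)
    (h : ∃ i, b i ≠ 0 ∧ c i = 0) :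
    (∑ a ∈ Finset.univ.filter (fun a => pauliMaj a b),
        (-1 : ℝ) ^ (pauliWt a) * sympInd a c) = 0 := by
  obtain ⟨i, hb, hc⟩ := h
  refine Finset.sum_involution
    (fun a _ => Function.update a i (if a i = 0 then b i else 0)) ?_ ?_ ?_ ?_
  · intro a _
    rw [sympInd_update a c i _ hc]
    by_cases h0 : a i = 0
    · rw [if_pos h0, pauliWt_update a i _ h0 hb]
      ring
    -- `a` is recovered from its toggled version, so the weight formula applies in reverse.
    · have hw := pauliWt_update (Function.update a i 0) i (a i) (by simp) h0
      rw [Function.update_idem, Function.update_eq_self] at hw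
      rw [if_neg h0, hw]
      ring
  · intro a _ _ heq
    have hi := congrFun heq i
    by_cases h0 : a i = 0
    · simp [h0, hb] at hi
    · simp [h0] at hi
      exact h0 hi.symm
  · intro a ha
    have hab : pauliMaj a b := by simpa using ha
    simp only [Finset.mem_filter, Finset.mem_univ, true_and]
    intro j hj
    by_cases hji : j = i
    · subst hji
      by_cases h0 : a j = 0
      · simp [h0]
      · simp [h0] at hj
    · simp only [Function.update_of_ne hji] at hj ⊢
      exact hab j hj
  · intro a ha
    have hab : pauliMaj a b := by simpa using ha
    by_cases h0 : a i = 0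
    · simp only [h0, if_true, Function.update_self, if_neg hb, Function.update_idem]
      rw [← h0, Function.update_eq_self]
    · simp [← hab i h0]
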